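/- For every integer m ≥ 0 there exists a finite non-empty family 𝓕 of finite graphs, each having at least one edge, such that sat(n,𝓕) = m for all sufficiently large integers n. -/

import Mathlib

open SimpleGraph Filter Topology

/-- `H` (on `β`) is contained in `G` (on `α`): `G` has a subgraph isomorphic to `H`. -/
def Contains {α β : Type*} (G : SimpleGraph α) (H : SimpleGraph β) : Prop :=
  ∃ f : β ↪ α, ∀ a b : β, H.Adj a b → G.Adj (f a) (f b)

/-- A family of finite graphs, each given on a vertex set `Fin n`. -/
abbrev GraphFam := Set ((n : ℕ) × SimpleGraph (Fin n))

/-- `G` is `𝓕`-saturated: `G` contains no member of `𝓕`, but adding any missing edge to `G`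
creates a member of `𝓕`. -/
def FamSaturated (𝓕 : GraphFam) {α : Type*} (G : SimpleGraph α) : Prop :=
  (∀ F ∈ 𝓕, ¬ Contains G F.2) ∧
    ∀ u v : α, u ≠ v → ¬ G.Adj u v →
      ∃ F ∈ 𝓕, Contains (G ⊔ SimpleGraph.fromEdgeSet {s(u, v)}) F.2

/-- `sat n 𝓕` is the minimum number of edges in an `𝓕`-saturated graph on `n` vertices. -/
noncomputable def sat (n : ℕ) (𝓕 : GraphFam) : ℕ :=
  sInf {m | ∃ G : SimpleGraph (Fin n), FamSaturated 𝓕 G ∧ Nat.card G.edgeSet = m}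

/-!
A graph with `k` edges has at most `2 * k` non-isolated vertices, so a graph on at least `2 * k`
vertices has at least `k` edges exactly when it contains one of the finitely many graphs with
`2 * k` vertices and `k` edges, isolated vertices allowed. Forbidding these graphs for `k = m + 1`
therefore means having at most `m` edges, and a graph is maximal with that property exactly when it
has `m` edges.
-/

section EdgeCount

variable {α β : Type*} {G : SimpleGraph α} {k : ℕ}

theorem contains_iff_isContained {H : SimpleGraph β} : Contains G H ↔ H ⊑ G :=
  ⟨fun ⟨f, hf⟩ ↦ ⟨⟨f, hf _ _⟩, f.injective⟩, fun ⟨f⟩ ↦ ⟨f.toEmbedding, fun _ _ ↦ f.toHom.map_adj⟩⟩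

theorem Contains.card_edgeSet_le [Finite α] {H : SimpleGraph β} (h : Contains G H) :
    Nat.card H.edgeSet ≤ Nat.card G.edgeSet := by
  obtain ⟨f⟩ := contains_iff_isContained.1 h
  exact Nat.card_le_card_of_injective f.mapEdgeSet f.mapEdgeSet.injective

theorem card_edgeSet_sup_fromEdgeSet_singleton [Finite α] {u v : α} (huv : u ≠ v)
    (h : ¬ G.Adj u v) :
    Nat.card (G ⊔ fromEdgeSet {s(u, v)}).edgeSet = Nat.card G.edgeSet + 1 := by
  classical
  have := Fintype.ofFinite α
  simp only [Nat.card_eq_fintype_card, card_edgeSet]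
  exact G.card_edgeFinset_sup_edge h huv

theorem exists_le_card_edgeSet_eq (hk : k ≤ Nat.card G.edgeSet) :
    ∃ H ≤ G, Nat.card H.edgeSet = k := by
  obtain ⟨s, hsG, hs⟩ := Set.exists_subset_card_eq hk
  have hedge : (fromEdgeSet s).edgeSet = s :=
    (edgeSet_fromEdgeSet s).trans <| sdiff_eq_left.2 <| Set.disjoint_left.2 fun _ he ↦
      G.not_isDiag_of_mem_edgeSet (hsG he)
  refine ⟨fromEdgeSet s, ?_, ?_⟩
  · rwa [← edgeSet_subset_edgeSet, hedge]
  · rw [hedge, Nat.card_coe_set_eq, hs]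

theorem le_card_edgeSet_top [Finite α] (hk : 2 * k ≤ Nat.card α) :
    k ≤ Nat.card (⊤ : SimpleGraph α).edgeSet := by
  classical
  have := Fintype.ofFinite α
  rw [Nat.card_eq_fintype_card] at hk
  rw [Nat.card_eq_fintype_card, ← edgeFinset_card, card_edgeFinset_top_eq_card_choose_two]
  obtain rfl | hpos := k.eq_zero_or_pos
  · exact Nat.zero_le _
  calc k ≤ (2 * k).choose 2 := by
        rw [Nat.choose_two_right, Nat.le_div_iff_mul_le two_pos, mul_comm k]
        exact Nat.le_mul_of_pos_right _ (by omega)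
    _ ≤ (Fintype.card α).choose 2 := Nat.choose_le_choose 2 hk

theorem ncard_support_le_two_mul_card_edgeSet [Finite α] :
    G.support.ncard ≤ 2 * Nat.card G.edgeSet := by
  classical
  have := Fintype.ofFinite α
  have hdeg : ∀ v ∈ G.support.toFinset, 1 ≤ G.degree v := fun v hv ↦
    (G.degree_pos_iff_mem_support v).2 (Set.mem_toFinset.1 hv)
  calc G.support.ncard = ∑ _v ∈ G.support.toFinset, 1 := by
        rw [Set.ncard_eq_toFinset_card', Finset.card_eq_sum_ones]
    _ ≤ ∑ v ∈ G.support.toFinset, G.degree v := Finset.sum_le_sum hdeg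
    _ ≤ ∑ v, G.degree v := Finset.sum_le_univ_sum_of_nonneg fun _ ↦ Nat.zero_le _
    _ = 2 * Nat.card G.edgeSet := by
        rw [sum_degrees_eq_twice_card_edges, edgeFinset_card, Nat.card_eq_fintype_card]

theorem exists_fin_contains_card_edgeSet_eq [Finite α] {N : ℕ} (hkN : 2 * k ≤ N)
    (hNα : N ≤ Nat.card α) (hk : k ≤ Nat.card G.edgeSet) :
    ∃ H : SimpleGraph (Fin N), Contains G H ∧ Nat.card H.edgeSet = k := by
  classical
  have := Fintype.ofFinite α
  obtain ⟨K, hKG, rfl⟩ := exists_le_card_edgeSet_eq hk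
  have hsupp : K.support.toFinset.card ≤ N := by
    rw [← Set.ncard_eq_toFinset_card']
    exact ncard_support_le_two_mul_card_edgeSet.trans hkN
  obtain ⟨t, ht, htN⟩ :=
    Finset.exists_superset_card_eq hsupp (hNα.trans_eq Nat.card_eq_fintype_card)
  let L := K.induce (t : Set α)
  have hL : Fintype.card (t : Set α) = N := by simpa using htN
  let e : L ≃g L.overFin hL := L.overFinIso hL
  refine ⟨L.overFin hL, contains_iff_isContained.2 ?_, ?_⟩
  · exact (isContained_congr_left e).1 ⟨(Copy.ofLE K G hKG).comp (Copy.induce K t)⟩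
  · rw [← Nat.card_congr e.mapEdgeSet]
    simpa only [edgeFinset_card, ← Nat.card_eq_fintype_card] using
      K.card_edgeFinset_induce_of_support_subset (Set.toFinset_subset.1 ht)

end EdgeCount

section Saturation

variable {α : Type*} {𝓕 : GraphFam} {m n : ℕ}

theorem famSaturated_iff_card_edgeSet_eq [Finite α]
    (h𝓕 : ∀ G : SimpleGraph α, (∃ F ∈ 𝓕, Contains G F.2) ↔ m < Nat.card G.edgeSet)
    (hm : m ≤ Nat.card (⊤ : SimpleGraph α).edgeSet) {G : SimpleGraph α} :
    FamSaturated 𝓕 G ↔ Nat.card G.edgeSet = m := by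
  have hfree : (∀ F ∈ 𝓕, ¬ Contains G F.2) ↔ Nat.card G.edgeSet ≤ m := by
    simpa only [not_exists, not_and, not_lt] using (h𝓕 G).not
  simp only [FamSaturated, hfree, h𝓕]
  constructor
  · rintro ⟨hle, hadd⟩
    by_cases hG : G = ⊤
    · exact hle.antisymm (hG ▸ hm)
    · obtain ⟨u, v, huv, hGuv⟩ := ne_top_iff_exists_not_adj.1 hG
      have hlt := hadd u v huv hGuv
      rw [card_edgeSet_sup_fromEdgeSet_singleton huv hGuv] at hlt
      exact hle.antisymm (Nat.lt_succ_iff.1 hlt)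
  · rintro rfl
    refine ⟨le_rfl, fun u v huv hGuv ↦ ?_⟩
    rw [card_edgeSet_sup_fromEdgeSet_singleton huv hGuv]
    exact Nat.lt_succ_self _

theorem sat_eq_of_contains_iff_lt_card_edgeSet
    (h𝓕 : ∀ G : SimpleGraph (Fin n), (∃ F ∈ 𝓕, Contains G F.2) ↔ m < Nat.card G.edgeSet)
    (hm : m ≤ Nat.card (⊤ : SimpleGraph (Fin n)).edgeSet) :
    sat n 𝓕 = m := by
  obtain ⟨G, -, hG⟩ := exists_le_card_edgeSet_eq hm
  have hset : {k | ∃ G : SimpleGraph (Fin n), FamSaturated 𝓕 G ∧ Nat.card G.edgeSet = k} = {m} := by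
    simp only [famSaturated_iff_card_edgeSet_eq h𝓕 hm]
    exact Set.eq_singleton_iff_unique_mem.2 ⟨⟨G, hG, hG⟩, fun _ ⟨_, hHm, hHk⟩ ↦ hHk.symm.trans hHm⟩
  rw [sat, hset, csInf_singleton]

end Saturation

section GraphsWithCardEdges

/-- The family of all graphs with vertex set `Fin N` and exactly `k` edges, isolated vertices being
allowed. For `2 * k ≤ N`, forbidding it in graphs on at least `N` vertices means having fewer than
`k` edges. -/
def graphsWithCardEdges (N k : ℕ) : GraphFam :=
  {F | F.1 = N ∧ Nat.card F.2.edgeSet = k}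

variable {N k : ℕ}

theorem finite_graphsWithCardEdges : (graphsWithCardEdges N k).Finite := by
  refine (Set.finite_range (Sigma.mk (β := fun n ↦ SimpleGraph (Fin n)) N)).subset ?_
  rintro ⟨_, H⟩ ⟨rfl, -⟩
  exact ⟨H, rfl⟩

theorem nonempty_graphsWithCardEdges (hN : 2 * k ≤ N) : (graphsWithCardEdges N k).Nonempty := by
  obtain ⟨H, -, hH⟩ := exists_le_card_edgeSet_eq <|
    le_card_edgeSet_top (α := Fin N) (hN.trans_eq (Nat.card_fin N).symm)
  exact ⟨⟨N, H⟩, rfl, hH⟩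

theorem exists_mem_graphsWithCardEdges_contains_iff {α : Type*} [Finite α] {G : SimpleGraph α}
    (hkN : 2 * k ≤ N) (hNα : N ≤ Nat.card α) :
    (∃ F ∈ graphsWithCardEdges N k, Contains G F.2) ↔ k ≤ Nat.card G.edgeSet := by
  constructor
  · rintro ⟨F, ⟨-, rfl⟩, hGF⟩
    exact hGF.card_edgeSet_le
  · intro hk
    obtain ⟨H, hGH, hH⟩ := exists_fin_contains_card_edgeSet_eq hkN hNα hk
    exact ⟨⟨N, H⟩, ⟨rfl, hH⟩, hGH⟩

theorem sat_graphsWithCardEdges_succ {m n : ℕ} (hmN : 2 * (m + 1) ≤ N) (hNn : N ≤ n) :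
    sat n (graphsWithCardEdges N (m + 1)) = m := by
  have hNn' : N ≤ Nat.card (Fin n) := hNn.trans_eq (Nat.card_fin n).symm
  exact sat_eq_of_contains_iff_lt_card_edgeSet
    (fun _ ↦ exists_mem_graphsWithCardEdges_contains_iff hmN hNn')
    (le_card_edgeSet_top (by omega))

end GraphsWithCardEdges

/-- For every integer `m ≥ 0` there is a finite non-empty family `𝓕` of graphs, each having at
least one edge, with `sat(n,𝓕) = m` for all sufficiently large `n`. -/
theorem stmt5 (m : ℕ) :
    ∃ 𝓕 : GraphFam, 𝓕.Finite ∧ 𝓕.Nonempty ∧ (∀ F ∈ 𝓕, 1 ≤ Nat.card F.2.edgeSet) ∧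
      ∀ᶠ n : ℕ in atTop, sat n 𝓕 = m := by
  refine ⟨graphsWithCardEdges (2 * (m + 1)) (m + 1), finite_graphsWithCardEdges,
    nonempty_graphsWithCardEdges le_rfl, ?_, ?_⟩
  · rintro F ⟨-, hF⟩
    exact hF ▸ Nat.le_add_left 1 m
  · filter_upwards [eventually_ge_atTop (2 * (m + 1))] with n hn
    exact sat_graphsWithCardEdges_succ le_rfl hn
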